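/- Let M be a metric space, {X_m}_{m≥1} M-valued random elements, X an M-valued random element, and {N_n}_{n≥1} positive-integer-valued random variables, all on a common probability space. Suppose that for every n and m, N_n is independent of X_m. If N_n → ∞ in probability (P(N_n < K) → 0 for every fixed K) and X_m converges in distribution to X as m → ∞, then X_{N_n} converges in distribution to X as n → ∞. -/

import Mathlib

open Filter MeasureTheory ProbabilityTheory

theorem random_index_integral
    {Ω M : Type*} [MeasurableSpace Ω] [MetricSpace M]
    [MeasurableSpace M] [BorelSpace M]
    (P : Measure Ω) [IsProbabilityMeasure P]
    (X : ℕ → Ω → M) (N : Ω → ℕ)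
    (hX : ∀ m, Measurable (X m)) (hN : Measurable N)
    (hindep : ∀ m : ℕ, IndepFun N (X m) P)
    (f : BoundedContinuousFunction M ℝ) :
    Integrable (fun ω => ∫ ω', f (X (N ω) ω') ∂P) P ∧
    ∫ ω, f (X (N ω) ω) ∂P = ∫ ω, (∫ ω', f (X (N ω) ω') ∂P) ∂P := by
  have hfm : Measurable f := f.continuous.measurable
  have hmeas : Measurable (fun ω => X (N ω) ω) := by
    have h : Measurable (fun p : ℕ × Ω => X p.1 p.2) :=
      measurable_from_prod_countable_right hX
    exact h.comp (hN.prodMk measurable_id)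
  have hi1 : Integrable (fun ω => f (X (N ω) ω)) P :=
    Integrable.of_bound (hfm.comp hmeas).aestronglyMeasurable ‖f‖
      (Eventually.of_forall fun ω => f.norm_coe_le_norm _)
  have hi2 : Integrable (fun ω => ∫ ω', f (X (N ω) ω') ∂P) P := by
    refine Integrable.of_bound ((measurable_from_nat
      (f := fun m => ∫ ω', f (X m ω') ∂P)).comp hN).aestronglyMeasurable ‖f‖
      (Eventually.of_forall fun ω => ?_)
    refine (norm_integral_le_of_norm_le_const
      (Eventually.of_forall fun ω' => f.norm_coe_le_norm _)).trans ?_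
    simp
  refine ⟨hi2, ?_⟩
  have hms : ∀ m, MeasurableSet (N ⁻¹' {m}) := fun m => hN (measurableSet_singleton m)
  have hd : Pairwise (Function.onFun Disjoint fun m => N ⁻¹' {m}) := by
    intro i j hij
    exact Disjoint.preimage _ (by simpa using hij)
  have hU : (⋃ m, N ⁻¹' {m}) = Set.univ := by
    ext ω; simp
  rw [← setIntegral_univ (f := fun ω => f (X (N ω) ω)), ← setIntegral_univ
    (f := fun ω => ∫ ω', f (X (N ω) ω') ∂P), ← hU,
    integral_iUnion hms hd hi1.integrableOn, integral_iUnion hms hd hi2.integrableOn]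
  congr 1
  ext m
  have e1 : ∫ ω in N ⁻¹' {m}, f (X (N ω) ω) ∂P = ∫ ω in N ⁻¹' {m}, f (X m ω) ∂P :=
    setIntegral_congr_fun (hms m) (fun ω hω => by
      have : N ω = m := hω
      simp only [this])
  have e2 : ∫ ω in N ⁻¹' {m}, (∫ ω', f (X (N ω) ω') ∂P) ∂P
      = ∫ ω in N ⁻¹' {m}, (∫ ω', f (X m ω') ∂P) ∂P :=
    setIntegral_congr_fun (hms m) (fun ω hω => by
      have : N ω = m := hω
      simp only [this])
  rw [e1, e2, setIntegral_const]
  have hi : IndepFun (fun ω => (({m} : Set ℕ).indicator (fun _ => (1:ℝ))) (N ω))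
      (fun ω => f (X m ω)) P :=
    (hindep m).comp (measurable_from_nat (f := ({m} : Set ℕ).indicator (fun _ => (1:ℝ)))) hfm
  have h := hi.integral_fun_mul_eq_mul_integral
    ((measurable_from_nat (f := ({m} : Set ℕ).indicator
      (fun _ => (1:ℝ)))).comp hN).aestronglyMeasurable
    (hfm.comp (hX m)).aestronglyMeasurable
  have e3 : (fun ω => (({m} : Set ℕ).indicator (fun _ => (1:ℝ))) (N ω))
      = (N ⁻¹' {m}).indicator 1 := by
    ext ω; simp [Set.indicator]
  rw [e3, integral_indicator_one (hms m)] at h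
  rw [smul_eq_mul, ← h, ← integral_indicator (hms m)]
  congr 1
  ext ω
  by_cases hω : N ω = m <;> simp [Set.indicator, hω]

theorem thm_random_index_in_distribution_convergence
    {Ω M : Type*} [MeasurableSpace Ω] [MetricSpace M]
    [MeasurableSpace M] [BorelSpace M]
    (P : Measure Ω) [IsProbabilityMeasure P]
    (X : ℕ → Ω → M) (Xlim : Ω → M) (N : ℕ → Ω → ℕ)
    (hX : ∀ m, Measurable (X m)) (hXlim : Measurable Xlim)
    (hN : ∀ n, Measurable (N n)) (hNpos : ∀ n ω, 0 < N n ω)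
    (hindep : ∀ n m : ℕ, IndepFun (N n) (X m) P)
    (hNinf : ∀ K : ℕ, Tendsto (fun n => P {ω | N n ω < K}) atTop (nhds 0))
    (hXconv : ∀ f : BoundedContinuousFunction M ℝ,
      Tendsto (fun m => ∫ ω, f (X m ω) ∂P) atTop (nhds (∫ ω, f (Xlim ω) ∂P))) :
    ∀ f : BoundedContinuousFunction M ℝ,
      Tendsto (fun n => ∫ ω, f (X (N n ω) ω) ∂P) atTop (nhds (∫ ω, f (Xlim ω) ∂P)) := by
  intro f
  set L := ∫ ω, f (Xlim ω) ∂P with hL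
  rw [Metric.tendsto_atTop]
  intro ε hε
  obtain ⟨K, hK⟩ := Metric.tendsto_atTop.1 (hXconv f) (ε / 2) (by positivity)
  have hb : ∀ Y : Ω → M, ‖∫ ω, f (Y ω) ∂P‖ ≤ ‖f‖ := fun Y => by
    refine (norm_integral_le_of_norm_le_const
      (Eventually.of_forall fun ω' => f.norm_coe_le_norm _)).trans ?_
    simp
  have hreal : Tendsto (fun n => 2 * ‖f‖ * P.real {ω | N n ω < K}) atTop (nhds 0) := by
    have := (ENNReal.tendsto_toReal ENNReal.zero_ne_top).comp (hNinf K)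
    simpa [Measure.real] using Tendsto.const_mul (2 * ‖f‖) this
  obtain ⟨n0, hn0⟩ := eventually_atTop.1 (hreal.eventually_lt_const (half_pos hε))
  refine ⟨n0, fun n hn => ?_⟩
  obtain ⟨hi, he⟩ := random_index_integral P X (N n) hX (hN n) (hindep n) f
  have hms : MeasurableSet {ω | N n ω < K} := hN n measurableSet_Iio
  have hint : Integrable (({ω | N n ω < K}).indicator (fun _ => 2 * ‖f‖)) P :=
    (integrable_const _).indicator hms
  have hle : ‖∫ ω, ((∫ ω', f (X (N n ω) ω') ∂P) - L) ∂P‖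
      ≤ ∫ ω, (ε / 2 + ({ω | N n ω < K}).indicator (fun _ => 2 * ‖f‖) ω) ∂P := by
    refine norm_integral_le_of_norm_le ((integrable_const _).add hint)
      (Eventually.of_forall fun ω => ?_)
    by_cases hω : N n ω < K
    · have h1 := norm_sub_le (∫ ω', f (X (N n ω) ω') ∂P) L
      have h2 := hb (X (N n ω))
      have h3 := hb Xlim
      simp only [Set.indicator, Set.mem_ofPred_eq, hω, if_true]
      linarith
    · have h1 := hK (N n ω) (not_lt.1 hω)
      rw [dist_eq_norm] at h1
      simp only [Set.indicator, Set.mem_ofPred_eq, hω, if_false]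
      linarith
  rw [integral_sub hi (integrable_const _), integral_add (integrable_const _) hint,
    integral_indicator_const _ hms] at hle
  simp only [integral_const, probReal_univ, smul_eq_mul, one_mul] at hle
  rw [dist_eq_norm, he]
  have := hn0 n hn
  linarith
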